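/- Let k be a commutative ring. Let M=(E,𝓘) be a matroid, let X be a totally ordered set, let ℓ : E → X be a labeling function, let 𝔎 be a set of broken circuits of M (not necessarily all of them), and let a_K ∈ k be given for each K ∈ 𝔎. Let F be any flat of M. Then Σ_{B ⊆ F} (−1)^{|B|} Π_{K ∈ 𝔎, K ⊆ B} a_K equals 1 if F = ∅ and equals 0 otherwise. -/

import Mathlib

/-!
Let `m` be an element of the nonempty flat `F` whose label is maximal among the labels of elements
of `F`. If a broken circuit `K = C \ {e}` is contained in `F`, then `e ∈ F`, since a flat contains
`e` as soon as it contains the rest of a circuit through `e` (`IsFlat.mem_of_circuit`). Hence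
`ℓ e ≤ ℓ m`, and so `m ∉ K`, because every element of `K` has label strictly smaller than `ℓ e`.
Thus for `B ⊆ F \ {m}` the sets `B` and `B ∪ {m}` contain the same members of `𝔎`, and their
contributions cancel.

If `F = ∅`, only `B = ∅` contributes, and the product is empty: `∅` would be a broken circuit only
if there were a loop `e`, but then `e` would lie in the flat `∅`.
-/

open scoped Classical

noncomputable section

/-- The rank function of the matroid `(E, 𝓘)` (with ground set the whole type `α`):
`r_M(S) = max { |Z| : Z ∈ 𝓘, Z ⊆ S }`. -/
def mrank {α : Type*} [DecidableEq α] (𝓘 : Finset (Finset α)) (S : Finset α) : ℕ :=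
  (𝓘.filter fun Z => Z ⊆ S).sup Finset.card

/-- `T` is a flat of the matroid `(E, 𝓘)`: for some `k`, the set `T` has rank `k` and is
maximal (under inclusion) among subsets of the ground set of rank `k`. -/
def IsFlat {α : Type*} [DecidableEq α] (𝓘 : Finset (Finset α)) (T : Finset α) : Prop :=
  ∃ k, mrank 𝓘 T = k ∧ ∀ W : Finset α, mrank 𝓘 W = k → T ⊆ W → W = T

/-- `C` is a circuit of the matroid `(E, 𝓘)`: a minimal element of `𝒫(E) ∖ 𝓘`. -/
def IsCircuitM {α : Type*} (𝓘 : Finset (Finset α)) (C : Finset α) : Prop :=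
  C ∉ 𝓘 ∧ ∀ D : Finset α, D ∉ 𝓘 → D ⊆ C → D = C

/-- The closure `T̄` of `T`: the intersection of all flats of the matroid containing
`T`. -/
def mclosure {α : Type*} [Fintype α] [DecidableEq α] (𝓘 : Finset (Finset α))
    (T : Finset α) : Finset α :=
  Finset.univ.filter fun x => ∀ G : Finset α, IsFlat 𝓘 G → T ⊆ G → x ∈ G

/-- A broken circuit of the matroid `(E, 𝓘)` (with respect to the labeling function
`ℓ`): a set of the form `C \ {e}`, where `C` is a circuit of `M` and `e` is the unique
element of `C` attaining the maximum label among the elements of `C`. -/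
def IsBrokenCircuitM {α X : Type*} [LinearOrder X] (𝓘 : Finset (Finset α))
    (ℓ : α → X) (K : Finset α) : Prop :=
  ∃ C e, IsCircuitM 𝓘 C ∧ e ∈ C ∧ (∀ e' ∈ C, e' ≠ e → ℓ e' < ℓ e) ∧ K = C.erase e

/-- A flat containing all elements but `e` of a circuit also contains `e`. Indeed, extending
`C \ {e}` to a maximal independent subset `Y` of `F`, exchange shows that `Y` has maximal size even
among the independent subsets of `F ∪ {e}`, so that adding `e` to `F` does not raise the rank. -/
theorem IsFlat.mem_of_circuit {α : Type*} [DecidableEq α] {𝓘 : Finset (Finset α)}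
    (h2 : ∀ Y ∈ 𝓘, ∀ Z : Finset α, Z ⊆ Y → Z ∈ 𝓘)
    (h3 : ∀ Y ∈ 𝓘, ∀ Z ∈ 𝓘, Y.card < Z.card → ∃ x ∈ Z \ Y, insert x Y ∈ 𝓘)
    {F : Finset α} (hF : IsFlat 𝓘 F) {C : Finset α} (hC : IsCircuitM 𝓘 C) {e : α} (he : e ∈ C)
    (hCF : C.erase e ⊆ F) : e ∈ F := by
  obtain ⟨r, hr, hmax⟩ := hF
  have hind : C.erase e ∈ 𝓘 := by
    by_contra h
    have := hC.2 _ h (Finset.erase_subset _ _)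
    exact Finset.notMem_erase e C (this.symm ▸ he)
  obtain ⟨Y, hY, hYmax⟩ := Finset.exists_max_image
    (𝓘.filter fun Y => C.erase e ⊆ Y ∧ Y ⊆ F) Finset.card
    ⟨C.erase e, by simp only [Finset.mem_filter]; exact ⟨hind, subset_rfl, hCF⟩⟩
  simp only [Finset.mem_filter] at hY hYmax
  obtain ⟨hYI, hCY, hYF⟩ := hY
  have hle : mrank 𝓘 (insert e F) ≤ Y.card := by
    refine Finset.sup_le fun Z hZ => ?_
    simp only [Finset.mem_filter] at hZ
    by_contra! hlt
    obtain ⟨x, hx, hxY⟩ := h3 Y hYI Z hZ.1 hlt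
    rw [Finset.mem_sdiff] at hx
    rcases Finset.mem_insert.1 (hZ.2 hx.1) with rfl | hxF
    · refine hC.1 (h2 _ hxY _ ?_)
      rw [← Finset.insert_erase he]
      exact Finset.insert_subset_insert _ hCY
    · have := hYmax (insert x Y)
        ⟨hxY, hCY.trans (Finset.subset_insert _ _), Finset.insert_subset hxF hYF⟩
      rw [Finset.card_insert_of_notMem hx.2] at this
      omega
  have hYr : Y.card ≤ mrank 𝓘 F :=
    Finset.le_sup (f := Finset.card) (by simp only [Finset.mem_filter]; exact ⟨hYI, hYF⟩)
  have hmono : mrank 𝓘 F ≤ mrank 𝓘 (insert e F) := by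
    refine Finset.sup_mono fun Z hZ => ?_
    simp only [Finset.mem_filter] at hZ ⊢
    exact ⟨hZ.1, hZ.2.trans (Finset.subset_insert _ _)⟩
  have := hmax (insert e F) (by omega) (Finset.subset_insert _ _)
  exact this ▸ Finset.mem_insert_self e F

/-- Let `M = (E, 𝓘)` be a matroid (ground set the whole finite type
`α`), let `ℓ` be a labeling function, let `𝔎` be a set of broken circuits of `M`, and
let `a_K ∈ k` for each `K ∈ 𝔎`. Let `F` be any flat of `M`. Then
`∑_{B ⊆ F} (−1)^{|B|} ∏_{K ∈ 𝔎, K ⊆ B} a_K` equals `1` if `F = ∅` and `0`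
otherwise. -/
theorem matroid_sum_powerset_flat
    (k : Type*) [CommRing k] {α : Type*} [Fintype α] [DecidableEq α]
    (𝓘 : Finset (Finset α))
    (h1 : ∅ ∈ 𝓘)
    (h2 : ∀ Y ∈ 𝓘, ∀ Z : Finset α, Z ⊆ Y → Z ∈ 𝓘)
    (h3 : ∀ Y ∈ 𝓘, ∀ Z ∈ 𝓘, Y.card < Z.card → ∃ x ∈ Z \ Y, insert x Y ∈ 𝓘)
    {X : Type*} [LinearOrder X] (ℓ : α → X)
    (𝔎 : Finset (Finset α)) (h𝔎 : ∀ K ∈ 𝔎, IsBrokenCircuitM 𝓘 ℓ K)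
    (a : Finset α → k)
    (F : Finset α) (hF : IsFlat 𝓘 F) :
    ∑ B ∈ F.powerset, (-1 : k) ^ B.card * ∏ K ∈ 𝔎.filter (fun K => K ⊆ B), a K =
      if F = ∅ then 1 else 0 := by
  -- The element whose label exceeds all labels in `K` lies in `F` itself.
  have key : ∀ K ∈ 𝔎, K ⊆ F → ∃ e ∈ F, ∀ x ∈ K, ℓ x < ℓ e := by
    intro K hK hKF
    obtain ⟨C, e, hC, he, hlt, hKC⟩ := h𝔎 K hK
    -- `IsBrokenCircuitM` erases with the classical `DecidableEq` instance; passing to membership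
    -- avoids comparing it with the given one.
    have hmem : ∀ x, x ∈ K ↔ x ≠ e ∧ x ∈ C := fun x => by
      rw [hKC]
      exact @Finset.mem_erase α (fun a b => Classical.propDecidable (a = b)) x e C
    refine ⟨e, hF.mem_of_circuit h2 h3 hC he fun x hx => ?_, fun x hx => ?_⟩
    · exact hKF ((hmem x).2 (Finset.mem_erase.1 hx))
    · exact hlt x ((hmem x).1 hx).2 ((hmem x).1 hx).1
  rcases F.eq_empty_or_nonempty with rfl | hne
  · have hfil : 𝔎.filter (fun K => K ⊆ ∅) = ∅ := by
      refine Finset.filter_eq_empty_iff.2 fun K hK hKF => ?_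
      obtain ⟨e, he, -⟩ := key K hK hKF
      exact Finset.notMem_empty e he
    simp only [Finset.powerset_empty, Finset.sum_singleton, hfil]
    simp
  · rw [if_neg hne.ne_empty]
    obtain ⟨m, hm, hmmax⟩ := Finset.exists_max_image F ℓ hne
    rw [← Finset.insert_erase hm, Finset.sum_powerset_insert (Finset.notMem_erase m F),
      ← Finset.sum_add_distrib]
    refine Finset.sum_eq_zero fun B hB => ?_
    have hBF := Finset.mem_powerset.1 hB
    have hmB : m ∉ B := fun h => Finset.notMem_erase m F (hBF h)
    have hfil : 𝔎.filter (fun K => K ⊆ insert m B) = 𝔎.filter (fun K => K ⊆ B) := by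
      refine Finset.filter_congr fun K hK =>
        ⟨fun h => ?_, fun h => h.trans (Finset.subset_insert _ _)⟩
      obtain ⟨e, he, hlt⟩ := key K hK
        (h.trans (Finset.insert_subset hm (hBF.trans (Finset.erase_subset _ _))))
      have hmK : m ∉ K := fun hmK => (hlt m hmK).not_ge (hmmax e he)
      exact (Finset.subset_insert_iff_of_notMem hmK).1 h
    rw [hfil, Finset.card_insert_of_notMem hmB, pow_succ]
    ring
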